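/- Let k and ℓ be nonnegative integers with k ≤ ℓ, and for each ν with ℓ−k ≤ ν ≤ ℓ+k define b_{kℓν} = ((2ν+1)/2) ∫_{−1}^{1} x^k P_ℓ(x) P_ν(x) dx, so that x^k P_ℓ(x) = Σ_{ν=ℓ−k}^{ℓ+k} b_{kℓν} P_ν(x). Then |b_{kℓν}| ≤ 1 for all such ν. -/

import Mathlib

open Real

noncomputable section

/-- The Legendre polynomial of degree `n`, via Rodrigues' formula. -/
def legendreP (n : ℕ) (x : ℝ) : ℝ :=
  (1 / (2 ^ n * (n.factorial : ℝ))) * iteratedDeriv n (fun t : ℝ => (t ^ 2 - 1) ^ n) x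

open Polynomial in
/-- `(X^2-1)^n / (2^n n!)`. -/
def legW (n : ℕ) : ℝ[X] := C (1 / (2 ^ n * (n.factorial : ℝ))) * (X ^ 2 - 1) ^ n

open Polynomial in
/-- Legendre polynomial as a polynomial. -/
def legQ (n : ℕ) : ℝ[X] := derivative^[n] (legW n)

open Polynomial in
lemma iteratedDeriv_poly (p : ℝ[X]) (n : ℕ) :
    iteratedDeriv n (fun t => p.eval t) = fun t => (derivative^[n] p).eval t := by
  induction n with
  | zero => simp
  | succ n ih =>
    rw [iteratedDeriv_succ, ih]
    funext t
    rw [Polynomial.deriv, Function.iterate_succ_apply']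

open Polynomial in
lemma legendreP_eq (n : ℕ) (x : ℝ) : legendreP n x = (legQ n).eval x := by
  have h := iteratedDeriv_poly ((X ^ 2 - 1) ^ n) n
  simp only [eval_pow, eval_sub, eval_X, eval_one] at h
  rw [legendreP, h, legQ, legW, iterate_derivative_C_mul, eval_mul, eval_C]

open Polynomial in
lemma legW_succ (n : ℕ) : (2 * ((n : ℝ[X]) + 1)) * legW (n + 1) = (X ^ 2 - 1) * legW n := by
  have h : (2 * ((n : ℝ[X]) + 1)) = C (2 * ((n : ℝ) + 1)) := by
    simp only [map_add, map_mul, map_natCast, map_one, map_ofNat]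
  have h2 : (1 / (2 ^ n * (n.factorial : ℝ)))
      = (2 * ((n : ℝ) + 1)) * (1 / (2 ^ (n + 1) * ((n + 1).factorial : ℝ))) := by
    have := n.factorial_ne_zero
    rw [Nat.factorial_succ]
    push_cast
    field_simp
    ring
  rw [h, legW, legW, h2]
  generalize (1 / (2 ^ (n + 1) * ((n + 1).factorial : ℝ))) = c
  rw [C_mul (a := 2 * ((n : ℝ) + 1))]
  ring

open Polynomial in
lemma derivative_legW_succ (n : ℕ) : derivative (legW (n + 1)) = legW n * X := by
  have h2 : (1 / (2 ^ n * (n.factorial : ℝ)))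
      = (2 * ((n : ℝ) + 1)) * (1 / (2 ^ (n + 1) * ((n + 1).factorial : ℝ))) := by
    have := n.factorial_ne_zero
    rw [Nat.factorial_succ]
    push_cast
    field_simp
    ring
  rw [legW, legW, h2, derivative_C_mul, derivative_pow]
  generalize (1 / (2 ^ (n + 1) * ((n + 1).factorial : ℝ))) = c
  have h3 : derivative (X ^ 2 - 1 : ℝ[X]) = 2 * X := by
    simp [derivative_pow, ← C_ofNat]
  rw [h3, Nat.add_sub_cancel]
  simp only [map_add, map_mul, map_natCast, map_one, map_ofNat]
  push_cast
  ring

open Polynomial in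
lemma legQ_succ (n : ℕ) :
    legQ (n + 1) = X * legQ n + (n : ℝ[X]) * derivative^[n - 1] (legW n) := by
  rw [legQ, Function.iterate_succ_apply, derivative_legW_succ, iterate_derivative_mul_X, legQ,
    nsmul_eq_mul]
  ring

open Polynomial in
lemma legQ_aux (n : ℕ) :
    ((n : ℝ[X]) + 2) * derivative^[n] (legW (n + 1)) = X * legQ (n + 1) - legQ n := by
  have h1 : (n : ℝ[X]) * derivative^[n - 1] (legW n * X)
      = (n : ℝ[X]) * derivative^[n] (legW (n + 1)) := by
    cases n with
    | zero => simp
    | succ m =>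
      rw [Function.iterate_succ_apply _ m (legW (m + 1 + 1)), derivative_legW_succ (m + 1)]
      simp
  have h2 := congrArg (fun p => derivative^[n] p) (legW_succ n)
  have h3 : (2 * ((n : ℝ[X]) + 1)) = ((2 * (n + 1) : ℕ) : ℝ[X]) := by push_cast; ring
  have h4 : (X ^ 2 - 1) * legW n = legW n * X * X - legW n := by ring
  simp only [h3, h4] at h2
  rw [iterate_derivative_natCast_mul, iterate_derivative_sub, iterate_derivative_mul_X,
    iterate_derivative_mul_X, nsmul_eq_mul, nsmul_eq_mul, h1] at h2
  rw [legQ_succ, legQ]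
  push_cast at h2
  linear_combination h2

open Polynomial in
lemma legQ_rec (n : ℕ) : ((n : ℝ[X]) + 1) * legQ (n + 1) + (n : ℝ[X]) * legQ (n - 1)
    = (2 * (n : ℝ[X]) + 1) * (X * legQ n) := by
  cases n with
  | zero => rw [legQ_succ]; simp
  | succ m =>
    have h1 := legQ_succ (m + 1)
    have h2 := legQ_aux m
    simp only [Nat.add_sub_cancel] at h1 ⊢
    push_cast at h1 ⊢
    linear_combination ((m : ℝ[X]) + 2) * h1 + ((m : ℝ[X]) + 1) * h2

open Polynomial in
/-- The integral functional. -/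
def legL (p : ℝ[X]) : ℝ := ∫ x in (-1 : ℝ)..1, p.eval x

open Polynomial in
lemma legInt (p : ℝ[X]) : IntervalIntegrable (fun x => p.eval x) MeasureTheory.volume (-1) 1 :=
  p.continuous.intervalIntegrable _ _

open Polynomial in
lemma legL_add (p q : ℝ[X]) : legL (p + q) = legL p + legL q := by
  simp only [legL, eval_add]
  exact intervalIntegral.integral_add (legInt p) (legInt q)

open Polynomial in
lemma legL_C_mul (c : ℝ) (q : ℝ[X]) : legL (C c * q) = c * legL q := by
  simp [legL]

open Polynomial in
lemma legL_parts (p q : ℝ[X]) (h1 : p.eval 1 = 0) (h2 : p.eval (-1) = 0) :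
    legL (derivative p * q) = - legL (p * derivative q) := by
  have h := intervalIntegral.integral_deriv_mul_eq_sub (a := (-1 : ℝ)) (b := 1)
    (fun x _ => p.hasDerivAt x) (fun x _ => q.hasDerivAt x)
    (legInt _) (legInt _)
  have h3 := legL_add (derivative p * q) (p * derivative q)
  simp only [legL, eval_add, eval_mul] at h3 ⊢
  rw [h3, h1, h2] at h
  linarith

open Polynomial in
lemma legW_boundary (n i : ℕ) (hi : i < n) (x : ℝ) (hx : x ^ 2 = 1) :
    (derivative^[i] (legW n)).eval x = 0 := by
  rw [legW, iterate_derivative_C_mul, eval_mul]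
  obtain ⟨r, hr⟩ := pow_sub_dvd_iterate_derivative_pow (X ^ 2 - 1 : ℝ[X]) n i
  rw [hr]
  have : n - i ≠ 0 := by omega
  simp [hx, this]

open Polynomial in
lemma legL_zero (n i : ℕ) (hi : i ≤ n) (q : ℝ[X]) (hq : derivative^[i] q = 0) :
    legL (derivative^[i] (legW n) * q) = 0 := by
  induction i generalizing q with
  | zero =>
    have : q = 0 := hq
    simp [this, legL]
  | succ i ih =>
    rw [Function.iterate_succ_apply', legL_parts _ _ (legW_boundary n i hi 1 (by norm_num))
      (legW_boundary n i hi (-1) (by norm_num)), ih (by omega) _ hq, neg_zero]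

open Polynomial in
lemma legL_orth_lt (n m : ℕ) (h : m < n) : legL (legQ n * legQ m) = 0 := by
  apply legL_zero n n le_rfl
  rw [legQ, ← Function.iterate_add_apply]
  apply iterate_derivative_eq_zero
  have h1 : (X ^ 2 - 1 : ℝ[X]).natDegree ≤ 2 := by compute_degree
  have h2 : (legW m).natDegree ≤ m * 2 :=
    (natDegree_C_mul_le _ _).trans (natDegree_pow_le_of_le m h1)
  omega

open Polynomial in
lemma legL_orth (n m : ℕ) (h : m ≠ n) : legL (legQ n * legQ m) = 0 := by
  rcases lt_or_gt_of_ne h with h | h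
  · exact legL_orth_lt n m h
  · rw [mul_comm]; exact legL_orth_lt m n h

open Polynomial in
lemma legL_rec (n : ℕ) (q : ℝ[X]) :
    ((n : ℝ) + 1) * legL (legQ (n + 1) * q) + n * legL (legQ (n - 1) * q)
      = (2 * n + 1) * legL (X * legQ n * q) := by
  rw [← legL_C_mul, ← legL_C_mul, ← legL_C_mul, ← legL_add]
  congr 1
  have := legQ_rec n
  simp only [map_add, map_mul, map_natCast, map_one, map_ofNat]
  linear_combination q * this

open Polynomial in
lemma legL_norm (n : ℕ) : (2 * (n : ℝ) + 1) * legL (legQ n * legQ n) = 2 := by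
  induction n with
  | zero => simp [legQ, legW, legL]; norm_num
  | succ n ih =>
    have h1 := legL_rec n (legQ (n + 1))
    have h2 := legL_rec (n + 1) (legQ n)
    rw [legL_orth (n - 1) (n + 1) (by omega)] at h1
    rw [legL_orth (n + 1 + 1) n (by omega), Nat.add_sub_cancel] at h2
    have h3 : X * legQ (n + 1) * legQ n = X * legQ n * legQ (n + 1) := by ring
    rw [h3] at h2
    push_cast at h2 ⊢
    have h0 : (n : ℝ) + 1 ≠ 0 := by positivity
    apply mul_left_cancel₀ h0
    linear_combination (2 * (n : ℝ) + 3) * h1 - (2 * (n : ℝ) + 1) * h2 + ((n : ℝ) + 1) * ih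

open Polynomial in
lemma legL_bound (k ν : ℕ) : ∀ ℓ : ℕ,
    |((2 * (ν : ℝ) + 1) / 2) * legL (legQ ℓ * (X ^ k * legQ ν))| ≤ 1 := by
  induction k with
  | zero =>
    intro ℓ
    rw [pow_zero, one_mul]
    by_cases h : ν = ℓ
    · subst h
      have := legL_norm ν
      rw [show ((2 * (ν : ℝ) + 1) / 2) * legL (legQ ν * legQ ν) = 1 by linarith]
      simp
    · rw [legL_orth ℓ ν h]; simp
  | succ k ih =>
    intro ℓ
    have h := legL_rec ℓ (X ^ k * legQ ν)
    have h3 : X * legQ ℓ * (X ^ k * legQ ν) = legQ ℓ * (X ^ (k + 1) * legQ ν) := by ring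
    rw [h3] at h
    have a := abs_le.mp (ih (ℓ + 1))
    have b := abs_le.mp (ih (ℓ - 1))
    have hl : (0 : ℝ) ≤ ℓ := Nat.cast_nonneg ℓ
    have hp : (0 : ℝ) < 2 * ℓ + 1 := by positivity
    have e : (2 * (ℓ : ℝ) + 1) * (((2 * (ν : ℝ) + 1) / 2) * legL (legQ ℓ * (X ^ (k + 1) * legQ ν)))
      = (ℓ + 1) * (((2 * (ν : ℝ) + 1) / 2) * legL (legQ (ℓ + 1) * (X ^ k * legQ ν)))
        + ℓ * (((2 * (ν : ℝ) + 1) / 2) * legL (legQ (ℓ - 1) * (X ^ k * legQ ν))) := by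
      linear_combination -((2 * (ν : ℝ) + 1) / 2) * h
    have a1 := mul_le_mul_of_nonneg_left a.1 (by positivity : (0 : ℝ) ≤ ℓ + 1)
    have a2 := mul_le_mul_of_nonneg_left a.2 (by positivity : (0 : ℝ) ≤ ℓ + 1)
    have b1 := mul_le_mul_of_nonneg_left b.1 hl
    have b2 := mul_le_mul_of_nonneg_left b.2 hl
    rw [abs_le]
    constructor
    · refine le_of_mul_le_mul_left ?_ hp
      linarith
    · refine le_of_mul_le_mul_left ?_ hp
      linarith

/-- For `k ≤ ℓ` and `ℓ - k ≤ ν ≤ ℓ + k`, the coefficients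
`b_{kℓν} = ((2ν+1)/2) ∫_{-1}^{1} x^k P_ℓ(x) P_ν(x) dx` of the Legendre expansion of
`x^k P_ℓ(x)` satisfy `|b_{kℓν}| ≤ 1`. -/
theorem legendre_expansion_coeff_bound (k ℓ ν : ℕ) (hkℓ : k ≤ ℓ)
    (hν₁ : ℓ - k ≤ ν) (hν₂ : ν ≤ ℓ + k) :
    |((2 * (ν : ℝ) + 1) / 2) * ∫ x in (-1 : ℝ)..1, x ^ k * legendreP ℓ x * legendreP ν x|
      ≤ 1 := by
  have h := legL_bound k ν ℓ
  have e : legL (legQ ℓ * (Polynomial.X ^ k * legQ ν))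
      = ∫ x in (-1 : ℝ)..1, x ^ k * legendreP ℓ x * legendreP ν x := by
    unfold legL
    congr 1
    funext x
    simp only [legendreP_eq, Polynomial.eval_mul, Polynomial.eval_pow, Polynomial.eval_X]
    ring
  rw [← e]
  exact h
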